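/- Let ε0 = 0.02001 and δ0 = 0.02. There exists an absolute constant p0 ∈ (0,1) such that for all p with 0 < p ≤ p0 the following holds. Let opt > 0 be a real number, let M be a matching of size at least (1/2 − ε0)·opt in a finite simple graph G, and let B be a subgraph of G, edge-disjoint from M, with maximum degree at most ⌊1/p⌋ and with at least (⌊1/p⌋ − 1)·opt edges. If each edge of B is realized independently with probability p, then the expected maximum matching size of the graph formed by M together with the realized edges of B is at least (1/2 + δ0)·opt. -/

import Mathlib

/-!
Write `b = ⌊1/p⌋`, `m = |M|`, and let `U` be the set of vertices covered by `M`. Two ways of using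
the realized edges of `B` are compared; the better one always suffices.

*Independent picks.* Fix disjoint vertex sets `U'` and `W` and keep only the edges of `B` between
them. If every `w ∈ W` uses at most one of its realized edges, chosen uniformly, the picks of
different `w` are independent, and each edge is picked with probability at least
`q = (1 - (1 - p)^b) / b`, roughly `(1 - 1/e) p`. No extra randomness is introduced: the expectation
of a monotone function of the realized edges is bounded below by replacing the stars of the `w`
one at a time (`EP_ge_pick`, `EP_ge_PE`). A vertex of `U'` with `x` such edges is hit by some pick
with probability `1 - (1 - q)^x ≥ β x / b`, where `β = 0.46` is admissible for `p ≤ 1/1000`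
(`pow_concave`, `params`).

*Edges of `B` disjoint from `M`.* If there are `e₀` of them, some vertex bipartition cuts at least
half (`exists_cut`), and every hit vertex on one side adds an edge to `M`: the gain is at least
`β e₀ / (2 b)` (`gain_outside`).

*Augmenting paths of length three.* Let `e₁` be the number of edges of `B` with exactly one end in
`U`. An edge of `M` both of whose ends are hit from outside `U` is replaced by the two picked
edges. Being hit is nearly independent for the two ends (`prod_pair`), and `x y ≥ x + y - 1` for
`x, y ≤ 1`, so the gain is at least `β² (e₁ / b - m) - m b q²` (`gain_augment`, `two_bounds`).

Since the degrees in `U` sum to at most `2 m b`, we have `2 |B| ≤ 2 e₀ + e₁ + 2 m b`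
(`count_edges`), so `e₀` and `e₁` cannot both be small, and linear arithmetic finishes the proof.
-/

open scoped Classical symmDiff
open Real

noncomputable section

/-- `E` is the edge set of a simple graph: it contains no loops. -/
def EdgeSimple {V : Type*} (E : Finset (Sym2 V)) : Prop :=
  ∀ e ∈ E, ¬ e.IsDiag

/-- `M` is a matching: it has no loops and distinct edges share no vertex. -/
def IsMatchingSet {V : Type*} (M : Finset (Sym2 V)) : Prop :=
  (∀ e ∈ M, ¬ e.IsDiag) ∧
    ∀ e ∈ M, ∀ f ∈ M, e ≠ f → ∀ v : V, v ∈ e → v ∉ f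

/-- The maximum matching size of the graph with edge set `E`. -/
def matchNum {V : Type*} (E : Finset (Sym2 V)) : ℕ :=
  (E.powerset.filter fun M => IsMatchingSet M).sup Finset.card

/-- The degree of the vertex `v` in the edge set `E`. -/
def edeg {V : Type*} (E : Finset (Sym2 V)) (v : V) : ℕ :=
  (E.filter fun e => v ∈ e).card

/-- The expected maximum matching size of a `p`-realization of `E`, where each
edge of `E` is kept independently with probability `p`. -/
def expMatch {V : Type*} (p : ℝ) (E : Finset (Sym2 V)) : ℝ :=
  ∑ S ∈ E.powerset, p ^ S.card * (1 - p) ^ (E.card - S.card) * (matchNum S : ℝ)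

/-- The set of vertices covered by the edge set `M`. -/
def mVerts {V : Type*} [Fintype V] (M : Finset (Sym2 V)) : Finset V :=
  Finset.univ.filter fun v => ∃ e ∈ M, v ∈ e

/-! ### Expectation over a random subset -/

/-- The expectation of `F` at a `p`-realization of the finite set `T`. -/
def EP {α : Type*} (p : ℝ) (T : Finset α) (F : Finset α → ℝ) : ℝ :=
  ∑ S ∈ T.powerset, p ^ S.card * (1 - p) ^ (T.card - S.card) * F S

theorem EP_empty {α : Type*} (p : ℝ) (F : Finset α → ℝ) : EP p ∅ F = F ∅ := by
  simp [EP]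

theorem EP_insert {α : Type*} [DecidableEq α] (p : ℝ) {T : Finset α} {e : α} (he : e ∉ T)
    (F : Finset α → ℝ) :
    EP p (insert e T) F = p * EP p T (fun S => F (insert e S)) + (1 - p) * EP p T F := by
  unfold EP
  rw [Finset.sum_powerset_insert he, add_comm, Finset.mul_sum, Finset.mul_sum]
  congr 1
  · refine Finset.sum_congr rfl fun S hS => ?_
    have hS' := Finset.mem_powerset.1 hS
    have h1 : e ∉ S := fun h => he (hS' h)
    rw [Finset.card_insert_of_notMem he, Finset.card_insert_of_notMem h1,
      Nat.add_sub_add_right, pow_succ]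
    ring
  · refine Finset.sum_congr rfl fun S hS => ?_
    have hS' := Finset.card_le_card (Finset.mem_powerset.1 hS)
    rw [Finset.card_insert_of_notMem he, Nat.sub_add_comm hS', pow_succ]
    ring

theorem EP_union {α : Type*} [DecidableEq α] (p : ℝ) (T R : Finset α) (h : Disjoint T R)
    (F : Finset α → ℝ) :
    EP p (T ∪ R) F = EP p T (fun S => EP p R (fun S' => F (S ∪ S'))) := by
  induction T using Finset.induction_on generalizing F with
  | empty => simp [EP_empty]
  | insert e T he ih =>
    rw [Finset.disjoint_insert_left] at h
    have h1 : e ∉ T ∪ R := by simp [he, h.1]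
    rw [Finset.insert_union, EP_insert p h1, EP_insert p he, ih h.2, ih h.2]
    simp [Finset.insert_union]

theorem EP_mono {α : Type*} {p : ℝ} (hp0 : 0 ≤ p) (hp1 : p ≤ 1) (T : Finset α)
    {F G : Finset α → ℝ} (h : ∀ S, F S ≤ G S) : EP p T F ≤ EP p T G := by
  refine Finset.sum_le_sum fun S _ => ?_
  have : 0 ≤ 1 - p := by linarith
  exact mul_le_mul_of_nonneg_left (h S) (by positivity)

theorem EP_const {α : Type*} (p : ℝ) (T : Finset α) (c : ℝ) :
    EP p T (fun _ => c) = c := by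
  induction T using Finset.induction_on with
  | empty => simp [EP_empty]
  | insert e T he ih => rw [EP_insert p he, ih]; ring

theorem EP_sub_const {α : Type*} (p : ℝ) (T : Finset α) (F : Finset α → ℝ) (c : ℝ) :
    EP p T (fun S => F S - c) = EP p T F - c := by
  conv_rhs => rw [← EP_const p T c]
  simp [EP, mul_sub, Finset.sum_sub_distrib]

theorem EP_subset {α : Type*} [DecidableEq α] {p : ℝ} (hp0 : 0 ≤ p) (hp1 : p ≤ 1) {T B : Finset α}
    (hTB : T ⊆ B) {F : Finset α → ℝ} (hF : Monotone F) : EP p T F ≤ EP p B F := by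
  conv_rhs => rw [← Finset.union_sdiff_of_subset hTB, EP_union p _ _ Finset.disjoint_sdiff]
  refine EP_mono hp0 hp1 _ fun S => ?_
  rw [← EP_const p (B \ T) (F S)]
  exact EP_mono hp0 hp1 _ fun S' => hF Finset.subset_union_left

theorem one_sub_pow_le {p : ℝ} (hp1 : p ≤ 1) (n : ℕ) :
    1 - (1 - p) ^ n ≤ n * p := by
  have := one_add_mul_le_pow (a := -p) (by linarith) n
  rw [← sub_eq_add_neg] at this
  linarith

/-- `n ↦ (1 - y ^ n) / n` is antitone. -/
theorem pow_concave {y : ℝ} (hy0 : 0 ≤ y) (hy1 : y ≤ 1) {d b : ℕ} (hdb : d ≤ b) :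
    d * (1 - y ^ b) ≤ b * (1 - y ^ d) := by
  have key : ∀ n : ℕ, (n : ℝ) * (y ^ n * (1 - y)) ≤ 1 - y ^ n := by
    intro n
    induction n with
    | zero => simp
    | succ n ih =>
      push_cast
      have h1 : 0 ≤ y ^ n := by positivity
      have h2 : y ^ n ≤ 1 := pow_le_one₀ hy0 hy1
      have h3 : y * (n * (y ^ n * (1 - y))) ≤ y * (1 - y ^ n) :=
        mul_le_mul_of_nonneg_left ih hy0
      have h4 : y * y ^ n ≤ 1 := by nlinarith
      rw [pow_succ]
      nlinarith
  induction b, hdb using Nat.le_induction with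
  | base => exact le_rfl
  | succ b hb ih =>
    have h1 : y ^ b ≤ y ^ d := pow_le_pow_of_le_one hy0 hy1 hb
    have h2 : (d : ℝ) * (y ^ b * (1 - y)) ≤ d * (y ^ d * (1 - y)) := by
      have : 0 ≤ 1 - y := by linarith
      gcongr
    have := key d
    push_cast
    rw [pow_succ]
    nlinarith

/-- If `h S` is at least `a e` for every realized `e`, then `E[h]` is at least the probability
that some element is realized times the average of `a`. The elements are exposed in decreasing
order of `a`, so that the exposed element is as good as all the later ones. -/
theorem EP_ge_avg {α : Type*} {p : ℝ} (hp0 : 0 ≤ p) (hp1 : p ≤ 1) (T : Finset α)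
    (a : α → ℝ) (ha : ∀ e, 0 ≤ a e) (h : Finset α → ℝ) (h0 : ∀ S, 0 ≤ h S)
    (hS : ∀ S, ∀ e ∈ S, a e ≤ h S) :
    (1 - (1 - p) ^ T.card) * ∑ e ∈ T, a e ≤ T.card * EP p T h := by
  induction T using Finset.induction_on_max_value a with
  | empty => simp
  | insert e T he hmax ih =>
    rw [EP_insert p he, Finset.sum_insert he, Finset.card_insert_of_notMem he]
    have h1 : a e ≤ EP p T (fun S => h (insert e S)) := by
      rw [← EP_const p T (a e)]
      exact EP_mono hp0 hp1 _ fun S => hS _ _ (Finset.mem_insert_self e S)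
    have h2 : ∑ x ∈ T, a x ≤ T.card * a e := by
      have := Finset.sum_le_card_nsmul T a (a e) hmax
      simpa using this
    have h3 : 0 ≤ ∑ x ∈ T, a x := Finset.sum_nonneg fun x _ => ha x
    have h4 : 0 ≤ EP p T h := by
      rw [← EP_const p T 0]
      exact EP_mono hp0 hp1 _ h0
    have hb := one_sub_pow_le hp1 (T.card + 1)
    have hae := ha e
    rw [pow_succ] at hb ⊢
    push_cast at hb ⊢
    set n := T.card
    set A := ∑ x ∈ T, a x
    set Y := EP p T h
    set r := (1 - p) ^ n
    have h5 : (n + 1) * (p * a e + (1 - p) * Y) ≤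
        (n + 1 : ℝ) * (p * EP p T (fun S => h (insert e S)) + (1 - p) * Y) := by
      gcongr
    refine le_trans ?_ h5
    rcases Nat.eq_zero_or_pos n with hn | hn
    · have hr : r = 1 := by simp [r, hn]
      have hnpos : (n : ℝ) = 0 := by simp [hn]
      rw [hnpos] at h2 ⊢
      rw [hr]
      have : 0 ≤ (1 - p) * Y := mul_nonneg (by linarith) h4
      have : A = 0 := by linarith
      rw [this]; linarith
    · have hnpos : (0 : ℝ) < n := by exact_mod_cast hn
      refine le_of_mul_le_mul_left ?_ hnpos
      -- The claim is affine in `A`; at `A = n * a e` it is an equality, at `A = 0` Bernoulli.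
      have e1 : 0 ≤ (n * a e - A) * ((n + 1) * p - (1 - r * (1 - p))) :=
        mul_nonneg (by linarith) (by linarith)
      have e2 : (1 - p) * ((1 - r) * A) ≤ (1 - p) * (n * Y) :=
        mul_le_mul_of_nonneg_left ih (by linarith)
      have e3 : (n + 1) * ((1 - p) * ((1 - r) * A)) ≤ (n + 1 : ℝ) * ((1 - p) * (n * Y)) := by
        gcongr
      nlinarith

/-- The expectation of a monotone function at a `p`-realization of a set `T` of at most `b`
elements is at least its expectation when at most one element of `T` is chosen, each with
probability `q = (1 - (1 - p) ^ b) / b`. -/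
theorem EP_ge_pick {α : Type*} {p q : ℝ} (hp0 : 0 ≤ p) (hp1 : p ≤ 1) {b : ℕ} (hb : 0 < b)
    (hq : b * q = 1 - (1 - p) ^ b) (T : Finset α) (hT : T.card ≤ b)
    {g : Finset α → ℝ} (hg : Monotone g) :
    (1 - T.card * q) * g ∅ + q * ∑ e ∈ T, g {e} ≤ EP p T g := by
  rcases T.eq_empty_or_nonempty with rfl | hne
  · simp [EP_empty]
  have h1 := EP_ge_avg hp0 hp1 T (fun e => g {e} - g ∅)
    (fun e => sub_nonneg.2 (hg (Finset.empty_subset _))) (fun S => g S - g ∅)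
    (fun S => sub_nonneg.2 (hg (Finset.empty_subset _)))
    (fun S e he => sub_le_sub_right (hg (Finset.singleton_subset_iff.2 he)) _)
  have hd : (0 : ℝ) < T.card := by exact_mod_cast hne.card_pos
  have hb' : (0 : ℝ) < b := by exact_mod_cast hb
  have h2 := pow_concave (y := 1 - p) (by linarith) (by linarith) hT
  have h3 : T.card * q ≤ 1 - (1 - p) ^ T.card := by
    rw [← hq] at h2
    refine le_of_mul_le_mul_left ?_ hb'
    linarith
  rw [EP_sub_const] at h1
  have h4 : 0 ≤ ∑ e ∈ T, (g {e} - g ∅) :=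
    Finset.sum_nonneg fun e _ => sub_nonneg.2 (hg (Finset.empty_subset _))
  have h5 := mul_le_mul_of_nonneg_right h3 h4
  have h6 : q * ∑ e ∈ T, (g {e} - g ∅) ≤ EP p T g - g ∅ := by
    refine le_of_mul_le_mul_left ?_ hd
    linarith
  rw [Finset.sum_sub_distrib, Finset.sum_const, nsmul_eq_mul] at h6
  linarith

/-- The expectation of `G (H ∪ X)`, where every `w` in the list `l` independently chooses at most
one element of `N w`, each with probability `q`, and `X` is the set of chosen elements. -/
def PE {V : Type*} (q : ℝ) (N : V → Finset V) : List V → (Finset V → ℝ) → Finset V → ℝ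
  | [], G, H => G H
  | w :: l, G, H => (1 - (N w).card * q) * PE q N l G H
      + q * ∑ x ∈ N w, PE q N l G (insert x H)

theorem PE_const {V : Type*} (q : ℝ) (N : V → Finset V) (l : List V) (c : ℝ) (H : Finset V) :
    PE q N l (fun _ => c) H = c := by
  induction l generalizing H with
  | nil => rfl
  | cons w l ih => simp only [PE, ih, Finset.sum_const, nsmul_eq_mul]; ring

theorem PE_add {V : Type*} (q : ℝ) (N : V → Finset V) (l : List V) (F G : Finset V → ℝ)
    (H : Finset V) :
    PE q N l (fun X => F X + G X) H = PE q N l F H + PE q N l G H := by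
  induction l generalizing H with
  | nil => rfl
  | cons w l ih => simp only [PE, ih, Finset.sum_add_distrib]; ring

theorem PE_sub {V : Type*} (q : ℝ) (N : V → Finset V) (l : List V) (F G : Finset V → ℝ)
    (H : Finset V) :
    PE q N l (fun X => F X - G X) H = PE q N l F H - PE q N l G H := by
  induction l generalizing H with
  | nil => rfl
  | cons w l ih => simp only [PE, ih, Finset.sum_sub_distrib]; ring

theorem PE_sum {V ι : Type*} (q : ℝ) (N : V → Finset V) (l : List V) (I : Finset ι)
    (F : ι → Finset V → ℝ) (H : Finset V) :
    PE q N l (fun X => ∑ i ∈ I, F i X) H = ∑ i ∈ I, PE q N l (F i) H := by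
  induction I using Finset.induction_on with
  | empty => simp [PE_const]
  | insert i I hi ih =>
    simp only [Finset.sum_insert hi]
    rw [PE_add, ih]

/-- The indicator of the event that `A` is not hit by `H`. -/
def avoid {V : Type*} (A H : Finset V) : ℝ := if Disjoint A H then 1 else 0

theorem PE_avoid {V : Type*} (q : ℝ) (N : V → Finset V) (l : List V) (A H : Finset V) :
    PE q N l (avoid A) H = avoid A H * (l.map fun w => 1 - q * ((A ∩ N w).card : ℝ)).prod := by
  induction l generalizing H with
  | nil => simp [PE]
  | cons w l ih =>
    simp only [PE, ih, List.map_cons, List.prod_cons]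
    have h1 : ∀ x, avoid A (insert x H) = avoid A H * (1 - if x ∈ A then 1 else 0) := by
      intro x
      unfold avoid
      by_cases hx : x ∈ A <;> simp [Finset.disjoint_insert_right, hx]
    have h2 : ∑ x ∈ N w, (1 - if x ∈ A then (1 : ℝ) else 0) = (N w).card - (A ∩ N w).card := by
      rw [Finset.sum_sub_distrib, Finset.sum_boole, Finset.inter_comm, ← Finset.filter_mem_eq_inter]
      simp
    simp only [h1]
    rw [← Finset.sum_mul, ← Finset.mul_sum, h2]
    ring

/-! ### Replacing realized stars by independent picks -/

/-- The edges joining `w` to `A`. -/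
def starE {V : Type*} (w : V) (A : Finset V) : Finset (Sym2 V) := A.image fun x => s(w, x)

theorem sum_starE {V : Type*} (w : V) (A : Finset V) (f : Sym2 V → ℝ) :
    ∑ e ∈ starE w A, f e = ∑ x ∈ A, f s(w, x) :=
  Finset.sum_image fun _ _ _ _ h => Sym2.congr_right.1 h

theorem card_starE {V : Type*} (w : V) (A : Finset V) : (starE w A).card = A.card :=
  Finset.card_image_of_injective _ fun _ _ h => Sym2.congr_right.1 h

/-- The edges joining `w` to `f w`, for `w` in `D`. -/
def picks {V : Type*} (D : Finset V) (f : V → V) : Finset (Sym2 V) := D.image fun w => s(w, f w)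

theorem picks_insert {V : Type*} (D : Finset V) (f : V → V) {w : V} (hw : w ∉ D) (x : V) :
    picks (insert w D) (Function.update f w x) = picks D f ∪ {s(w, x)} := by
  unfold picks
  rw [Finset.image_insert, Function.update_self, Finset.insert_eq, Finset.union_comm]
  congr 1
  refine Finset.image_congr fun y hy => ?_
  have : y ≠ w := fun h => hw (h ▸ hy)
  simp [Function.update_of_ne this]

theorem image_update {V : Type*} (D : Finset V) (f : V → V) {w : V} (hw : w ∉ D) (x : V) :
    (insert w D).image (Function.update f w x) = insert x (D.image f) := by
  rw [Finset.image_insert, Function.update_self]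
  congr 1
  refine Finset.image_congr fun y hy => ?_
  have : y ≠ w := fun h => hw (h ▸ hy)
  simp [Function.update_of_ne this]

/-- Comparison of a realization with independent picks: the stars of the vertices of `l` are
replaced one at a time, using `EP_ge_pick`, while `D` and `f` record the picks already made. -/
theorem EP_ge_PE {V : Type*} {p q : ℝ} (hp0 : 0 ≤ p) (hp1 : p ≤ 1) (hq0 : 0 ≤ q) {b : ℕ}
    (hb : 0 < b) (hq : b * q = 1 - (1 - p) ^ b) (U W : Finset V) (hUW : Disjoint U W)
    (N : V → Finset V) (hNU : ∀ w, N w ⊆ U) (hNb : ∀ w, (N w).card ≤ b)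
    (F : Finset (Sym2 V) → ℝ) (hF : Monotone F) (G : Finset V → ℝ)
    (hFG : ∀ (D : Finset V) (f : V → V), D ⊆ W → (∀ w ∈ D, f w ∈ N w) →
      G (D.image f) ≤ F (picks D f))
    (l : List V) (hl : l.Nodup) (hlW : ∀ w ∈ l, w ∈ W)
    (D : Finset V) (f : V → V) (hD : D ⊆ W) (hDl : ∀ w ∈ l, w ∉ D)
    (hf : ∀ w ∈ D, f w ∈ N w) :
    PE q N l G (D.image f) ≤
      EP p (l.toFinset.biUnion fun w => starE w (N w)) (fun S => F (picks D f ∪ S)) := by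
  induction l generalizing D f with
  | nil => simpa [PE, EP_empty] using hFG D f hD hf
  | cons w l ih =>
    rw [List.nodup_cons] at hl
    have hwW : w ∈ W := hlW w (by simp)
    have hwD : w ∉ D := hDl w (by simp)
    have hdisj : Disjoint (starE w (N w)) (l.toFinset.biUnion fun w => starE w (N w)) := by
      rw [Finset.disjoint_left]
      intro e he he'
      simp only [starE, Finset.mem_image, Finset.mem_biUnion, List.mem_toFinset] at he he'
      obtain ⟨x, hx, rfl⟩ := he
      obtain ⟨w', hw', y, hy, h⟩ := he'
      rcases Sym2.eq_iff.1 h with ⟨h1, -⟩ | ⟨-, h1⟩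
      · exact hl.1 (h1 ▸ hw')
      · exact Finset.disjoint_left.1 hUW (hNU w' hy) (h1 ▸ hwW)
    rw [List.toFinset_cons, Finset.biUnion_insert, EP_union p _ _ hdisj]
    have hg : Monotone (fun S => EP p (l.toFinset.biUnion fun w => starE w (N w))
        (fun S' => F (picks D f ∪ (S ∪ S')))) := by
      intro S T hST
      refine EP_mono hp0 hp1 _ fun S' => hF ?_
      exact Finset.union_subset_union_right (Finset.union_subset_union_left hST)
    refine le_trans ?_ (EP_ge_pick hp0 hp1 hb hq (starE w (N w))
      ((card_starE w (N w)).trans_le (hNb w)) hg)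
    rw [sum_starE, card_starE]
    have hq1 : (N w).card * q ≤ 1 := by
      have h1 : ((N w).card : ℝ) ≤ b := by exact_mod_cast hNb w
      have h2 : 0 ≤ (1 - p) ^ b := pow_nonneg (by linarith) _
      have h3 := mul_le_mul_of_nonneg_right h1 hq0
      linarith
    simp only [PE]
    refine add_le_add (mul_le_mul_of_nonneg_left ?_ (by linarith))
      (mul_le_mul_of_nonneg_left (Finset.sum_le_sum fun x hx => ?_) hq0)
    · simp only [Finset.empty_union]
      exact ih hl.2 (fun w' h' => hlW w' (by simp [h'])) D f hD
        (fun w' h' => hDl w' (by simp [h'])) hf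
    · have := ih hl.2 (fun w' h' => hlW w' (by simp [h'])) (insert w D) (Function.update f w x)
        (Finset.insert_subset hwW hD) ?_ ?_
      · rw [image_update D f hwD, picks_insert D f hwD] at this
        simpa only [Finset.union_assoc] using this
      · intro w' h'
        have h1 := hDl w' (by simp [h'])
        have h2 : w' ≠ w := fun h => hl.1 (h ▸ h')
        simp [h1, h2]
      · intro w' h'
        rcases Finset.mem_insert.1 h' with rfl | h''
        · simpa using hx
        · have : w' ≠ w := fun h => hwD (h ▸ h'')
          simpa [Function.update_of_ne this] using hf w' h''

theorem matchNum_mono {V : Type*} {E E' : Finset (Sym2 V)} (h : E ⊆ E') :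
    matchNum E ≤ matchNum E' := by
  unfold matchNum
  exact Finset.sup_mono (Finset.filter_subset_filter _ (Finset.powerset_mono.2 h))

theorem card_le_matchNum {V : Type*} {E M : Finset (Sym2 V)} (hM : IsMatchingSet M)
    (h : M ⊆ E) : M.card ≤ matchNum E := by
  unfold matchNum
  exact Finset.le_sup (f := Finset.card)
    (Finset.mem_filter.2 ⟨Finset.mem_powerset.2 h, hM⟩)

/-- A matching `M` avoiding `D` and `U'` can be enlarged by one picked edge for each vertex of
`U'`, provided that all these vertices are hit. -/
theorem matchNum_picks {V : Type*} {M E : Finset (Sym2 V)} (hM : IsMatchingSet M)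
    {D U' : Finset V} {f : V → V} (hDU : Disjoint D U') (hU : U' ⊆ D.image f)
    (hMD : ∀ e ∈ M, ∀ v ∈ e, v ∉ D) (hMU : ∀ e ∈ M, ∀ v ∈ e, v ∉ U')
    (hME : M ⊆ E) (hpE : picks D f ⊆ E) :
    M.card + U'.card ≤ matchNum E := by
  have hex : ∀ u : V, ∃ w, u ∈ U' → w ∈ D ∧ f w = u := by
    intro u
    by_cases hu : u ∈ U'
    · obtain ⟨w, hw⟩ := Finset.mem_image.1 (hU hu)
      exact ⟨w, fun _ => hw⟩
    · exact ⟨u, fun h => absurd h hu⟩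
  choose g hg using hex
  have hR : ∀ e ∈ U'.image (fun u => s(g u, u)), ∀ v ∈ e, v ∈ D ∨ v ∈ U' := by
    intro e he v hv
    obtain ⟨u, hu, rfl⟩ := Finset.mem_image.1 he
    rcases Sym2.mem_iff.1 hv with rfl | rfl
    · exact Or.inl (hg u hu).1
    · exact Or.inr hu
  have hdisj : Disjoint M (U'.image fun u => s(g u, u)) := by
    rw [Finset.disjoint_left]
    intro e he he'
    obtain ⟨u, hu, rfl⟩ := Finset.mem_image.1 he'
    exact hMU _ he u (by simp) hu
  have hinj : Set.InjOn (fun u => s(g u, u)) (U' : Set V) := by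
    intro u hu v hv h
    rcases Sym2.eq_iff.1 h with ⟨-, h⟩ | ⟨h, -⟩
    · exact h
    · exact absurd (h ▸ (hg u hu).1) fun h' => Finset.disjoint_left.1 hDU h' hv
  have hmatch : IsMatchingSet (M ∪ U'.image fun u => s(g u, u)) := by
    constructor
    · intro e he
      rcases Finset.mem_union.1 he with he | he
      · exact hM.1 e he
      · obtain ⟨u, hu, rfl⟩ := Finset.mem_image.1 he
        intro h
        have h : g u = u := h
        exact Finset.disjoint_left.1 hDU (hg u hu).1 (h.symm ▸ hu)
    · intro e he e' he' hne v hv hv'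
      rcases Finset.mem_union.1 he with he | he <;> rcases Finset.mem_union.1 he' with he' | he'
      · exact hM.2 e he e' he' hne v hv hv'
      · rcases hR e' he' v hv' with h | h
        · exact hMD e he v hv h
        · exact hMU e he v hv h
      · rcases hR e he v hv with h | h
        · exact hMD e' he' v hv' h
        · exact hMU e' he' v hv' h
      · obtain ⟨u, hu, rfl⟩ := Finset.mem_image.1 he
        obtain ⟨u', hu', rfl⟩ := Finset.mem_image.1 he'
        have hne' : u ≠ u' := fun h => hne (by rw [h])
        have h1 := hg u hu
        have h2 := hg u' hu'
        rcases Sym2.mem_iff.1 hv with h | h <;> rcases Sym2.mem_iff.1 hv' with h' | h'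
        · exact hne' (by rw [← h1.2, ← h2.2, ← h, ← h'])
        · exact Finset.disjoint_left.1 hDU h1.1 (by rw [← h, h']; exact hu')
        · exact Finset.disjoint_left.1 hDU h2.1 (by rw [← h', h]; exact hu)
        · exact hne' (by rw [← h, ← h'])
  have hsub : M ∪ U'.image (fun u => s(g u, u)) ⊆ E := by
    refine Finset.union_subset hME (subset_trans ?_ hpE)
    intro e he
    obtain ⟨u, hu, rfl⟩ := Finset.mem_image.1 he
    exact Finset.mem_image.2 ⟨g u, (hg u hu).1, by rw [(hg u hu).2]⟩
  have := card_le_matchNum hmatch hsub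
  rwa [Finset.card_union_of_disjoint hdisj, Finset.card_image_of_injOn hinj] at this

/-! ### Hit probabilities and the gain of the two strategies -/

/-- The neighbours in `A` of the vertex `v` in the edge set `B`. -/
def nb {V : Type*} (B : Finset (Sym2 V)) (A : Finset V) (v : V) : Finset V :=
  A.filter fun x => s(v, x) ∈ B

theorem starE_nb_subset {V : Type*} (B : Finset (Sym2 V)) (A : Finset V) (v : V) :
    starE v (nb B A v) ⊆ B := by
  intro e he
  obtain ⟨x, hx, rfl⟩ := Finset.mem_image.1 he
  exact (Finset.mem_filter.1 hx).2

theorem card_nb_le {V : Type*} (B : Finset (Sym2 V)) (A : Finset V) (v : V) :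
    (nb B A v).card ≤ edeg B v := by
  rw [← card_starE v]
  refine Finset.card_le_card fun e he => Finset.mem_filter.2 ⟨starE_nb_subset B A v he, ?_⟩
  obtain ⟨x, hx, rfl⟩ := Finset.mem_image.1 he
  simp

theorem EP_ge_PE_nb {V : Type*} {p q : ℝ} (hp0 : 0 ≤ p) (hp1 : p ≤ 1) (hq0 : 0 ≤ q) {b : ℕ}
    (hb : 0 < b) (hq : b * q = 1 - (1 - p) ^ b) (U W : Finset V) (hUW : Disjoint U W)
    (B : Finset (Sym2 V)) (hB : ∀ v, edeg B v ≤ b)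
    (F : Finset (Sym2 V) → ℝ) (hF : Monotone F) (G : Finset V → ℝ)
    (hFG : ∀ (D : Finset V) (f : V → V), D ⊆ W → (∀ w ∈ D, f w ∈ nb B U w) →
      G (D.image f) ≤ F (picks D f)) :
    PE q (nb B U) W.toList G ∅ ≤ EP p B F := by
  have h := EP_ge_PE hp0 hp1 hq0 hb hq U W hUW (nb B U) (fun w => Finset.filter_subset _ _)
    (fun w => (card_nb_le B U w).trans (hB w)) F hF G hFG W.toList (Finset.nodup_toList W)
    (fun w hw => Finset.mem_toList.1 hw) ∅ id (Finset.empty_subset _) (by simp) (by simp)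
  simp only [picks, Finset.image_empty, Finset.empty_union, Finset.toList_toFinset] at h
  exact h.trans (EP_subset hp0 hp1
    (Finset.biUnion_subset.2 fun w _ => starE_nb_subset B U w) hF)

theorem card_singleton_inter_nb {V : Type*} (B : Finset (Sym2 V)) {U : Finset V} {u : V}
    (hu : u ∈ U) (w : V) :
    ((({u} : Finset V) ∩ nb B U w).card : ℝ) = if s(u, w) ∈ B then 1 else 0 := by
  by_cases h : s(u, w) ∈ B
  · have : u ∈ nb B U w := Finset.mem_filter.2 ⟨hu, by rwa [Sym2.eq_swap]⟩
    rw [Finset.singleton_inter_of_mem this]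
    simp [h]
  · have : u ∉ nb B U w := fun h' => h (by rw [Sym2.eq_swap]; exact (Finset.mem_filter.1 h').2)
    rw [Finset.singleton_inter_of_notMem this]
    simp [h]

theorem prod_boole {V : Type*} (q : ℝ) (B : Finset (Sym2 V)) (W : Finset V) (u : V) :
    ∏ w ∈ W, (1 - q * if s(u, w) ∈ B then (1 : ℝ) else 0) = (1 - q) ^ (nb B W u).card := by
  have : ∀ w ∈ W, (1 - q * if s(u, w) ∈ B then (1 : ℝ) else 0)
      = if s(u, w) ∈ B then 1 - q else 1 := by
    intro w _
    split_ifs <;> simp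
  rw [Finset.prod_congr rfl this, Finset.prod_ite]
  simp [nb]

theorem PE_avoid_singleton {V : Type*} (q : ℝ) (B : Finset (Sym2 V)) (U W : Finset V) {u : V}
    (hu : u ∈ U) :
    PE q (nb B U) W.toList (avoid {u}) ∅ = (1 - q) ^ (nb B W u).card := by
  rw [PE_avoid, Finset.prod_map_toList, ← prod_boole]
  simp only [card_singleton_inter_nb B hu]
  simp [avoid]

/-- For two vertices the picks of each `w` are disjoint events, which perturbs the product formula
by at most `q ^ 2` for each `w`. -/
theorem prod_pair {ι : Type*} {q : ℝ} (hq0 : 0 ≤ q) (hq : q ≤ 1 / 2) (W : Finset ι)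
    (α γ : ι → ℝ) (ha0 : ∀ w, 0 ≤ α w) (ha1 : ∀ w, α w ≤ 1) (hc0 : ∀ w, 0 ≤ γ w)
    (hc1 : ∀ w, γ w ≤ 1) :
    (∏ w ∈ W, (1 - q * α w)) * (∏ w ∈ W, (1 - q * γ w)) - q ^ 2 * ∑ w ∈ W, α w
      ≤ ∏ w ∈ W, (1 - q * (α w + γ w)) := by
  have hle : ∀ x : ℝ, 0 ≤ x → x ≤ 1 → 0 ≤ 1 - q * x ∧ 1 - q * x ≤ 1 := fun x h0 h1 =>
    ⟨by nlinarith, by nlinarith⟩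
  induction W using Finset.induction_on with
  | empty => simp
  | insert i W hi ih =>
    rw [Finset.prod_insert hi, Finset.prod_insert hi, Finset.prod_insert hi, Finset.sum_insert hi]
    have hA0 : 0 ≤ ∏ w ∈ W, (1 - q * α w) :=
      Finset.prod_nonneg fun w _ => (hle _ (ha0 w) (ha1 w)).1
    have hA1 : ∏ w ∈ W, (1 - q * α w) ≤ 1 :=
      Finset.prod_le_one (fun w _ => (hle _ (ha0 w) (ha1 w)).1)
        fun w _ => (hle _ (ha0 w) (ha1 w)).2
    have hC0 : 0 ≤ ∏ w ∈ W, (1 - q * γ w) :=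
      Finset.prod_nonneg fun w _ => (hle _ (hc0 w) (hc1 w)).1
    have hC1 : ∏ w ∈ W, (1 - q * γ w) ≤ 1 :=
      Finset.prod_le_one (fun w _ => (hle _ (hc0 w) (hc1 w)).1)
        fun w _ => (hle _ (hc0 w) (hc1 w)).2
    have hk : 0 ≤ ∑ w ∈ W, α w := Finset.sum_nonneg fun w _ => ha0 w
    have i1 := ha0 i
    have i2 := ha1 i
    have i3 := hc0 i
    have i4 := hc1 i
    set A := ∏ w ∈ W, (1 - q * α w)
    set C := ∏ w ∈ W, (1 - q * γ w)
    set k := ∑ w ∈ W, α w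
    have hs0 : 0 ≤ 1 - q * (α i + γ i) := by nlinarith
    have hs1 : 1 - q * (α i + γ i) ≤ 1 := by nlinarith
    have h1 := mul_le_mul_of_nonneg_left ih hs0
    have h2 : A * C ≤ 1 := mul_le_one₀ hA1 hC0 hC1
    have h3 : (1 - q * (α i + γ i)) * (q ^ 2 * k) ≤ q ^ 2 * k :=
      mul_le_of_le_one_left (by positivity) hs1
    have h4 : α i * γ i * (A * C) ≤ α i := by
      have := mul_le_mul (mul_le_of_le_one_right i1 i4) h2 (by positivity) i1
      linarith
    have h5 : q ^ 2 * (α i * γ i * (A * C)) ≤ q ^ 2 * α i := by gcongr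
    linarith

theorem PE_avoid_pair {V : Type*} {q : ℝ} (hq0 : 0 ≤ q) (hq : q ≤ 1 / 2)
    (B : Finset (Sym2 V)) (U W : Finset V) {u v : V} (hu : u ∈ U) (hv : v ∈ U) (huv : u ≠ v) :
    (1 - q) ^ (nb B W u).card * (1 - q) ^ (nb B W v).card - q ^ 2 * (nb B W u).card ≤
      PE q (nb B U) W.toList (avoid {u, v}) ∅ := by
  rw [PE_avoid, Finset.prod_map_toList, ← prod_boole, ← prod_boole]
  have h1 : ∀ w, ((({u, v} : Finset V) ∩ nb B U w).card : ℝ)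
      = (if s(u, w) ∈ B then 1 else 0) + if s(v, w) ∈ B then 1 else 0 := by
    intro w
    rw [← card_singleton_inter_nb B hu, ← card_singleton_inter_nb B hv, Finset.insert_eq,
      Finset.union_inter_distrib_right, Finset.card_union_of_disjoint]
    · push_cast; rfl
    · exact Finset.disjoint_of_subset_left Finset.inter_subset_left
        (Finset.disjoint_of_subset_right Finset.inter_subset_left (by simpa using huv))
  have h2 : ((nb B W u).card : ℝ) = ∑ w ∈ W, if s(u, w) ∈ B then 1 else 0 := by
    simp [nb]
  simp only [h1]
  rw [h2]
  have h3 : avoid ({u, v} : Finset V) ∅ = 1 := by simp [avoid]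
  rw [h3, one_mul]
  refine prod_pair hq0 hq W _ _ ?_ ?_ ?_ ?_ <;> intro w <;> split_ifs <;> norm_num

theorem one_sub_avoid {V : Type*} (u : V) (H : Finset V) :
    1 - avoid {u} H = if u ∈ H then 1 else 0 := by
  unfold avoid
  by_cases h : u ∈ H <;> simp [h]

/-- Gain from edges disjoint from the matching: every hit vertex of `U` contributes an edge. -/
theorem gain_outside {V : Type*} {p q : ℝ} (hp0 : 0 ≤ p) (hp1 : p ≤ 1) (hq0 : 0 ≤ q) {b : ℕ}
    (hb : 0 < b) (hq : b * q = 1 - (1 - p) ^ b) (U W : Finset V) (hUW : Disjoint U W)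
    (M B : Finset (Sym2 V)) (hM : IsMatchingSet M) (hB : ∀ v, edeg B v ≤ b)
    (hMU : ∀ e ∈ M, ∀ v ∈ e, v ∉ U) (hMW : ∀ e ∈ M, ∀ v ∈ e, v ∉ W) :
    M.card + ∑ u ∈ U, (1 - (1 - q) ^ (nb B W u).card) ≤
      EP p B (fun S => (matchNum (M ∪ S) : ℝ)) := by
  have h := EP_ge_PE_nb hp0 hp1 hq0 hb hq U W hUW B hB (fun S => (matchNum (M ∪ S) : ℝ))
    (fun S T hST => Nat.cast_le.2 (matchNum_mono (Finset.union_subset_union_right hST)))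
    (fun H => M.card + ∑ u ∈ U, (1 - avoid {u} H)) ?_
  · refine le_trans (le_of_eq ?_) h
    rw [PE_add, PE_const, PE_sum]
    congr 1
    refine Finset.sum_congr rfl fun u hu => ?_
    rw [PE_sub, PE_const, PE_avoid_singleton q B U W hu]
  · intro D f hD hf
    simp only [one_sub_avoid, Finset.sum_boole]
    have := matchNum_picks (E := M ∪ picks D f) (U' := U.filter fun u => u ∈ D.image f) hM
      (f := f) (D := D) ?_ ?_ (fun e he v hv h' => hMW e he v hv (hD h'))
      (fun e he v hv h' => hMU e he v hv (Finset.mem_filter.1 h').1)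
      Finset.subset_union_left Finset.subset_union_right
    · exact_mod_cast this
    · rw [Finset.disjoint_left]
      intro v hv hv'
      exact Finset.disjoint_left.1 hUW (Finset.mem_filter.1 hv').1 (hD hv)
    · exact fun u hu => (Finset.mem_filter.1 hu).2

/-- The first endpoint of an edge, in the ordered representative chosen by `Quot.out`. -/
def fstE {V : Type*} (e : Sym2 V) : V := (Quot.out e).1

/-- The other endpoint of an edge. -/
def sndE {V : Type*} (e : Sym2 V) : V := (Quot.out e).2

theorem mk_fstE_sndE {V : Type*} (e : Sym2 V) : s(fstE e, sndE e) = e := Quot.out_eq e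

theorem fstE_ne_sndE {V : Type*} {e : Sym2 V} (he : ¬ e.IsDiag) : fstE e ≠ sndE e := by
  intro h
  apply he
  rw [← mk_fstE_sndE e]
  exact h

theorem mem_iff_fstE_sndE {V : Type*} {e : Sym2 V} {v : V} :
    v ∈ e ↔ v = fstE e ∨ v = sndE e := by
  conv_lhs => rw [← mk_fstE_sndE e]
  exact Sym2.mem_iff

/-- The set of vertices covered by the edge set `M`. -/
def cov {V : Type*} (M : Finset (Sym2 V)) : Finset V := M.biUnion fun e => {fstE e, sndE e}

theorem mem_cov {V : Type*} {M : Finset (Sym2 V)} {v : V} : v ∈ cov M ↔ ∃ e ∈ M, v ∈ e := by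
  simp [cov, mem_iff_fstE_sndE]

theorem sum_cov {V : Type*} {M : Finset (Sym2 V)} (hM : IsMatchingSet M) (φ : V → ℝ) :
    ∑ v ∈ cov M, φ v = ∑ e ∈ M, (φ (fstE e) + φ (sndE e)) := by
  unfold cov
  rw [Finset.sum_biUnion]
  · exact Finset.sum_congr rfl fun e he => Finset.sum_pair (fstE_ne_sndE (hM.1 e he))
  · intro e he f hf hef
    rw [Function.onFun, Finset.disjoint_left]
    intro v hv hv'
    exact hM.2 e he f hf hef v (mem_iff_fstE_sndE.2 (by simpa using hv))
      (mem_iff_fstE_sndE.2 (by simpa using hv'))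

theorem card_cov {V : Type*} {M : Finset (Sym2 V)} (hM : IsMatchingSet M) :
    (cov M).card = 2 * M.card := by
  have h := sum_cov hM (fun _ => (1 : ℝ))
  simp only [Finset.sum_const, nsmul_eq_mul, mul_one] at h
  have h' : ((cov M).card : ℝ) = ((2 * M.card : ℕ) : ℝ) := by
    rw [h]; push_cast; ring
  exact_mod_cast h'

theorem IsMatchingSet.subset {V : Type*} {M M' : Finset (Sym2 V)} (hM : IsMatchingSet M)
    (h : M' ⊆ M) : IsMatchingSet M' :=
  ⟨fun e he => hM.1 e (h he), fun e he f hf => hM.2 e (h he) f (h hf)⟩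

/-- Gain from augmenting paths of length three: every edge of `M` both of whose endpoints are hit
from outside is exchanged for two edges. -/
theorem gain_augment {V : Type*} {p q : ℝ} (hp0 : 0 ≤ p) (hp1 : p ≤ 1) (hq0 : 0 ≤ q)
    (hq2 : q ≤ 1 / 2) {b : ℕ}
    (hb : 0 < b) (hq : b * q = 1 - (1 - p) ^ b) (W : Finset V)
    (M B : Finset (Sym2 V)) (hM : IsMatchingSet M) (hB : ∀ v, edeg B v ≤ b)
    (hUW : Disjoint (cov M) W) :
    M.card + ∑ e ∈ M, ((1 - (1 - q) ^ (nb B W (fstE e)).card) *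
        (1 - (1 - q) ^ (nb B W (sndE e)).card) - q ^ 2 * b) ≤
      EP p B (fun S => (matchNum (M ∪ S) : ℝ)) := by
  have hf : ∀ e ∈ M, fstE e ∈ cov M := fun e he =>
    mem_cov.2 ⟨e, he, mem_iff_fstE_sndE.2 (Or.inl rfl)⟩
  have hs : ∀ e ∈ M, sndE e ∈ cov M := fun e he =>
    mem_cov.2 ⟨e, he, mem_iff_fstE_sndE.2 (Or.inr rfl)⟩
  have h := EP_ge_PE_nb hp0 hp1 hq0 hb hq (cov M) W hUW B hB
    (fun S => (matchNum (M ∪ S) : ℝ))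
    (fun S T hST => Nat.cast_le.2 (matchNum_mono (Finset.union_subset_union_right hST)))
    (fun H => M.card + ∑ e ∈ M,
      (((1 - avoid {fstE e} H) - avoid {sndE e} H) + avoid {fstE e, sndE e} H)) ?_
  · refine le_trans ?_ h
    rw [PE_add, PE_const, PE_sum]
    refine add_le_add_right (Finset.sum_le_sum fun e he => ?_) _
    rw [PE_add, PE_sub, PE_sub, PE_const, PE_avoid_singleton q B _ W (hf e he),
      PE_avoid_singleton q B _ W (hs e he)]
    have h1 := PE_avoid_pair hq0 hq2 B (cov M) W (hf e he) (hs e he) (fstE_ne_sndE (hM.1 e he))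
    have h2 : ((nb B W (fstE e)).card : ℝ) ≤ b := by
      exact_mod_cast (card_nb_le B W _).trans (hB _)
    have h3 := mul_le_mul_of_nonneg_left h2 (sq_nonneg q)
    linarith
  · intro D f hD hfD
    set H := D.image f
    have hterm : ∀ e : Sym2 V,
        ((1 - avoid {fstE e} H) - avoid {sndE e} H) + avoid {fstE e, sndE e} H
          = if fstE e ∈ H ∧ sndE e ∈ H then 1 else 0 := by
      intro e
      unfold avoid
      by_cases h1 : fstE e ∈ H <;> by_cases h2 : sndE e ∈ H <;> simp [h1, h2]
    simp only [hterm, Finset.sum_boole]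
    set K := M.filter fun e => fstE e ∈ H ∧ sndE e ∈ H
    have hKM : K ⊆ M := Finset.filter_subset _ _
    have hKU : cov K ⊆ cov M := fun v hv => by
      obtain ⟨e, he, hve⟩ := mem_cov.1 hv
      exact mem_cov.2 ⟨e, hKM he, hve⟩
    have := matchNum_picks (M := M \ K) (E := M ∪ picks D f) (U' := cov K)
      (hM.subset Finset.sdiff_subset) (f := f) (D := D) ?_ ?_ ?_ ?_
      (Finset.sdiff_subset.trans Finset.subset_union_left) Finset.subset_union_right
    · rw [card_cov (hM.subset hKM), Finset.card_sdiff_of_subset hKM] at this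
      have hle := Finset.card_le_card hKM
      have h' : M.card + K.card ≤ matchNum (M ∪ picks D f) := by omega
      exact_mod_cast h'
    · rw [Finset.disjoint_left]
      intro v hv hv'
      exact Finset.disjoint_left.1 hUW (hKU hv') (hD hv)
    · intro v hv
      obtain ⟨e, he, hve⟩ := mem_cov.1 hv
      have h2 := (Finset.mem_filter.1 he).2
      rcases mem_iff_fstE_sndE.1 hve with rfl | rfl
      · exact h2.1
      · exact h2.2
    · intro e he v hv hvD
      exact Finset.disjoint_left.1 hUW (mem_cov.2 ⟨e, (Finset.mem_sdiff.1 he).1, hv⟩) (hD hvD)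
    · intro e he v hv hvK
      obtain ⟨e', he', hve'⟩ := mem_cov.1 hvK
      have hne : e ≠ e' := fun h => (Finset.mem_sdiff.1 he).2 (h ▸ he')
      exact hM.2 e (Finset.mem_sdiff.1 he).1 e' (hKM he') hne v hv hve'

/-! ### Counting edges and numerical bounds -/

/-- The edges of `B` joining `U` to `W`. -/
def cutE {V : Type*} (B : Finset (Sym2 V)) (U W : Finset V) : Finset (Sym2 V) :=
  B.filter fun e => ∃ u ∈ U, ∃ w ∈ W, e = s(u, w)

theorem cutE_subset {V : Type*} (B : Finset (Sym2 V)) (U W : Finset V) : cutE B U W ⊆ B :=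
  Finset.filter_subset _ _

theorem card_cutE_le {V : Type*} (B : Finset (Sym2 V)) (U W : Finset V) :
    ((cutE B U W).card : ℝ) ≤ ∑ u ∈ U, ((nb B W u).card : ℝ) := by
  have h1 : cutE B U W ⊆ U.biUnion fun u => starE u (nb B W u) := by
    intro e he
    obtain ⟨heB, u, hu, w, hw, rfl⟩ := Finset.mem_filter.1 he
    exact Finset.mem_biUnion.2 ⟨u, hu, Finset.mem_image.2
      ⟨w, Finset.mem_filter.2 ⟨hw, heB⟩, rfl⟩⟩
  have h2 := (Finset.card_le_card h1).trans Finset.card_biUnion_le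
  simp only [card_starE] at h2
  exact_mod_cast h2

/-- Some vertex bipartition cuts at least half of the edges: toggling one endpoint of an edge
shows that a uniformly random vertex set separates its endpoints with probability one half. -/
theorem exists_cut {V : Type*} [Fintype V] (E : Finset (Sym2 V)) (hE : EdgeSimple E) :
    ∃ L : Finset V, E.card ≤ 2 * (cutE E L Lᶜ).card := by
  let σ : Finset V → Sym2 V → ℝ := fun L e => if fstE e ∈ L ↔ sndE e ∈ L then -1 else 1
  have hσ : ∀ e ∈ E, ∑ L : Finset V, σ L e = 0 := by
    intro e he
    have hne := fstE_ne_sndE (hE e he)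
    have hinv : Function.Involutive (fun L : Finset V => L ∆ {fstE e}) := fun L =>
      symmDiff_symmDiff_cancel_right _ _
    have h1 := Equiv.sum_comp (hinv.toPerm _) (fun L => σ L e)
    have h2 : ∀ L : Finset V, σ (hinv.toPerm _ L) e = - σ L e := by
      intro L
      simp only [Function.Involutive.coe_toPerm, σ, Finset.mem_symmDiff, Finset.mem_singleton]
      by_cases ha : fstE e ∈ L <;> by_cases hc : sndE e ∈ L <;> simp [ha, hc, hne.symm]
    simp only [h2, Finset.sum_neg_distrib] at h1
    linarith
  have hsum : ∑ L : Finset V, (0 : ℝ) ≤ ∑ L : Finset V, ∑ e ∈ E, σ L e := by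
    rw [Finset.sum_comm, Finset.sum_congr rfl hσ]
    simp
  obtain ⟨L, -, hL⟩ := Finset.exists_le_of_sum_le Finset.univ_nonempty hsum
  refine ⟨L, ?_⟩
  have h1 : ∀ e ∈ E, σ L e ≤ 2 * (if e ∈ cutE E L Lᶜ then 1 else 0) - 1 := by
    intro e he
    by_cases h : fstE e ∈ L ↔ sndE e ∈ L
    · simp only [σ, if_pos h]
      split_ifs <;> norm_num
    · have : e ∈ cutE E L Lᶜ := by
        refine Finset.mem_filter.2 ⟨he, ?_⟩
        by_cases ha : fstE e ∈ L
        · exact ⟨fstE e, ha, sndE e, by simpa [ha] using h, (mk_fstE_sndE e).symm⟩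
        · exact ⟨sndE e, by simpa [ha] using h, fstE e, by simpa using ha,
            by rw [Sym2.eq_swap, mk_fstE_sndE]⟩
      simp only [σ, if_neg h, if_pos this]
      norm_num
  have h2 := hL.trans (Finset.sum_le_sum h1)
  rw [Finset.sum_sub_distrib, ← Finset.mul_sum, Finset.sum_boole, Finset.filter_mem_eq_inter,
    Finset.inter_eq_right.2 (cutE_subset _ _ _)] at h2
  simp only [Finset.sum_const, nsmul_eq_mul, mul_one] at h2
  have h3 : (E.card : ℝ) ≤ ((2 * (cutE E L Lᶜ).card : ℕ) : ℝ) := by push_cast; linarith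
  exact_mod_cast h3

/-- An edge meeting `U` in two vertices uses up twice the degree in `U`, so there are few of
them. -/
theorem count_edges {V : Type*} [Fintype V] (B : Finset (Sym2 V)) (hB : EdgeSimple B)
    (U : Finset V) {b : ℕ} (hb : ∀ v, edeg B v ≤ b) :
    2 * B.card ≤ 2 * (cutE B Uᶜ Uᶜ).card + (cutE B U Uᶜ).card + U.card * b := by
  have h1 : ∑ v ∈ U, edeg B v = ∑ e ∈ B, (U.filter fun v => v ∈ e).card := by
    unfold edeg
    exact Finset.sum_card_bipartiteAbove_eq_sum_card_bipartiteBelow (fun v e => v ∈ e)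
  have h2 : ∑ v ∈ U, edeg B v ≤ U.card * b := by
    have := Finset.sum_le_card_nsmul U (edeg B) b fun v _ => hb v
    simpa using this
  have h3 : ∀ e ∈ B, 2 ≤ 2 * (if e ∈ cutE B Uᶜ Uᶜ then 1 else 0)
      + (if e ∈ cutE B U Uᶜ then 1 else 0) + (U.filter fun v => v ∈ e).card := by
    intro e he
    have hne := fstE_ne_sndE (hB e he)
    by_cases ha : fstE e ∈ U <;> by_cases hc : sndE e ∈ U
    · have : ({fstE e, sndE e} : Finset V) ⊆ U.filter fun v => v ∈ e := by
        intro v hv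
        rw [Finset.mem_insert, Finset.mem_singleton] at hv
        refine Finset.mem_filter.2 ⟨?_, mem_iff_fstE_sndE.2 hv⟩
        rcases hv with rfl | rfl <;> assumption
      have := Finset.card_le_card this
      rw [Finset.card_pair hne] at this
      omega
    · have h : e ∈ cutE B U Uᶜ := Finset.mem_filter.2
        ⟨he, fstE e, ha, sndE e, by simpa using hc, (mk_fstE_sndE e).symm⟩
      have : 0 < (U.filter fun v => v ∈ e).card := Finset.card_pos.2
        ⟨fstE e, Finset.mem_filter.2 ⟨ha, mem_iff_fstE_sndE.2 (Or.inl rfl)⟩⟩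
      rw [if_pos h]
      omega
    · have h : e ∈ cutE B U Uᶜ := Finset.mem_filter.2
        ⟨he, sndE e, hc, fstE e, by simpa using ha, by rw [Sym2.eq_swap, mk_fstE_sndE]⟩
      have : 0 < (U.filter fun v => v ∈ e).card := Finset.card_pos.2
        ⟨sndE e, Finset.mem_filter.2 ⟨hc, mem_iff_fstE_sndE.2 (Or.inr rfl)⟩⟩
      rw [if_pos h]
      omega
    · have h : e ∈ cutE B Uᶜ Uᶜ := Finset.mem_filter.2
        ⟨he, fstE e, by simpa using ha, sndE e, by simpa using hc, (mk_fstE_sndE e).symm⟩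
      rw [if_pos h]
      omega
  have h4 := Finset.sum_le_sum h3
  rw [Finset.sum_add_distrib, Finset.sum_add_distrib, ← Finset.mul_sum, Finset.sum_boole,
    Finset.sum_boole, Finset.filter_mem_eq_inter, Finset.filter_mem_eq_inter,
    Finset.inter_eq_right.2 (cutE_subset _ _ _),
    Finset.inter_eq_right.2 (cutE_subset _ _ _), ← h1] at h4
  simp only [Finset.sum_const, smul_eq_mul, Nat.cast_id] at h4
  omega

theorem pow_le_exp_neg_mul {x : ℝ} (hx : x ≤ 1) (b : ℕ) : (1 - x) ^ b ≤ exp (-(b * x)) := by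
  have h1 : 1 - x ≤ exp (-x) := by linarith [add_one_le_exp (-x)]
  calc (1 - x) ^ b ≤ exp (-x) ^ b := pow_le_pow_left₀ (by linarith) h1 b
    _ = exp (-(b * x)) := by rw [← exp_nat_mul]; congr 1; ring

/-- The parameters: `b = ⌊1/p⌋`, the pick probability `q ≈ (1 - 1/e) p` and the probability that a
vertex of full degree is hit, which tends to `1 - exp (-(1 - 1/e)) ≈ 0.468`. -/
theorem params {p : ℝ} (hp0 : 0 < p) (hp : p ≤ 1 / 1000) :
    ∃ q : ℝ, 1000 ≤ ⌊1 / p⌋₊ ∧ 0 ≤ q ∧ q ≤ p ∧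
      (⌊1 / p⌋₊ : ℝ) * q = 1 - (1 - p) ^ ⌊1 / p⌋₊ ∧ 0.46 ≤ 1 - (1 - q) ^ ⌊1 / p⌋₊ := by
  have h1 : (1000 : ℝ) ≤ 1 / p := by
    rw [le_div_iff₀ hp0]; linarith
  have hb : 1000 ≤ ⌊1 / p⌋₊ := Nat.le_floor (by exact_mod_cast h1)
  have h2 : 1 / p < ⌊1 / p⌋₊ + 1 := Nat.lt_floor_add_one _
  set b := ⌊1 / p⌋₊
  have hb' : (0 : ℝ) < b := by
    have : 0 < b := by omega
    exact_mod_cast this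
  have h3 : 1 < (b + 1) * p := by rwa [div_lt_iff₀ hp0] at h2
  have h4 : 0 ≤ (1 - p) ^ b := pow_nonneg (by linarith) _
  have h5 : (1 - p) ^ b ≤ 1 := pow_le_one₀ (by linarith) (by linarith)
  have hq : (b : ℝ) * ((1 - (1 - p) ^ b) / b) = 1 - (1 - p) ^ b := by
    field_simp
  set q := (1 - (1 - p) ^ b) / b
  have hq0 : 0 ≤ q := div_nonneg (by linarith) hb'.le
  have hqp : q ≤ p := by
    refine le_of_mul_le_mul_left ?_ hb'
    rw [hq]
    exact one_sub_pow_le (by linarith) b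
  refine ⟨q, hb, hq0, hqp, hq, ?_⟩
  have h6 : (1 - p) ^ b ≤ 0.37 := by
    refine (pow_le_exp_neg_mul (by linarith) b).trans ?_
    have h7 : exp (-(b * p)) ≤ exp (-0.999) := exp_le_exp.2 (by linarith)
    refine h7.trans ?_
    rw [exp_neg]
    have h8 := sum_le_exp_of_nonneg (x := 0.999) (by norm_num) 7
    norm_num [Finset.sum_range_succ, Nat.factorial] at h8
    rw [inv_le_comm₀ (exp_pos _) (by norm_num)]
    norm_num
    linarith
  have h7 : (1 - q) ^ b ≤ 0.54 := by
    refine (pow_le_exp_neg_mul (by linarith) b).trans ?_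
    have h7 : exp (-(b * q)) ≤ exp (-0.63) := exp_le_exp.2 (by linarith)
    refine h7.trans ?_
    rw [exp_neg]
    have h8 := sum_le_exp_of_nonneg (x := 0.63) (by norm_num) 5
    norm_num [Finset.sum_range_succ, Nat.factorial] at h8
    rw [inv_le_comm₀ (exp_pos _) (by norm_num)]
    norm_num
    linarith
  linarith

/-- The bounds obtained from the two strategies, with `m = |M|`, `e₀` the number of edges of `B`
disjoint from `M`, `e₁` the number of those with exactly one end in `M`. -/
theorem two_bounds {V : Type*} [Fintype V] {p q : ℝ} (hp0 : 0 ≤ p) (hp1 : p ≤ 1) (hq0 : 0 ≤ q)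
    (hq2 : q ≤ 1 / 2) {b : ℕ}
    (hb : 0 < b) (hq : b * q = 1 - (1 - p) ^ b) {β : ℝ} (hβ0 : 0 ≤ β)
    (hβ : β ≤ 1 - (1 - q) ^ b) (M B : Finset (Sym2 V)) (hM : IsMatchingSet M)
    (hBs : EdgeSimple B) (hB : ∀ v, edeg B v ≤ b) :
    M.card + β / 2 * ((cutE B (cov M)ᶜ (cov M)ᶜ).card / b) ≤
        EP p B (fun S => (matchNum (M ∪ S) : ℝ)) ∧
      M.card + (β ^ 2 * ((cutE B (cov M) (cov M)ᶜ).card / b - M.card) - M.card * (q ^ 2 * b)) ≤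
        EP p B (fun S => (matchNum (M ∪ S) : ℝ)) := by
  have hb' : (0 : ℝ) < b := by exact_mod_cast hb
  have hit : ∀ (W : Finset V) (u : V),
      β * ((nb B W u).card / b) ≤ 1 - (1 - q) ^ (nb B W u).card := by
    intro W u
    have h1 := pow_concave (y := 1 - q) (by linarith) (by linarith)
      ((card_nb_le B W u).trans (hB u))
    have h2 : ((nb B W u).card : ℝ) * β ≤ (nb B W u).card * (1 - (1 - q) ^ b) := by gcongr
    rw [mul_div_assoc', div_le_iff₀ hb']
    linarith
  have hle : ∀ (W : Finset V) (u : V), ((nb B W u).card : ℝ) / b ≤ 1 := by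
    intro W u
    rw [div_le_one hb']
    exact_mod_cast (card_nb_le B W u).trans (hB u)
  constructor
  · set Z := (cov M)ᶜ
    have hZ : ∀ e ∈ M, ∀ v ∈ e, v ∉ Z := fun e he v hv h =>
      (Finset.mem_compl.1 h) (mem_cov.2 ⟨e, he, hv⟩)
    obtain ⟨L, hL⟩ := exists_cut (cutE B Z Z) fun e he => hBs e (Finset.mem_filter.1 he).1
    have h1 := gain_outside hp0 hp1 hq0 hb hq (Z ∩ L) (Z \ L)
      (Finset.disjoint_of_subset_left Finset.inter_subset_right Finset.disjoint_sdiff) M B hM hB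
      (fun e he v hv h => hZ e he v hv (Finset.mem_inter.1 h).1)
      (fun e he v hv h => hZ e he v hv (Finset.mem_sdiff.1 h).1)
    refine le_trans (add_le_add_right ?_ _) h1
    have h2 : cutE (cutE B Z Z) L Lᶜ ⊆ cutE B (Z ∩ L) (Z \ L) := by
      intro e he
      obtain ⟨he, u, hu, w, hw, rfl⟩ := Finset.mem_filter.1 he
      obtain ⟨he, u', hu', w', hw', h⟩ := Finset.mem_filter.1 he
      have hw := Finset.mem_compl.1 hw
      have huw : u ∈ Z ∧ w ∈ Z := by
        rcases Sym2.eq_iff.1 h with ⟨rfl, rfl⟩ | ⟨rfl, rfl⟩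
        · exact ⟨hu', hw'⟩
        · exact ⟨hw', hu'⟩
      exact Finset.mem_filter.2 ⟨he, u, Finset.mem_inter.2 ⟨huw.1, hu⟩, w,
        Finset.mem_sdiff.2 ⟨huw.2, hw⟩, rfl⟩
    have h3 : ((cutE B Z Z).card : ℝ) ≤ 2 * ∑ u ∈ Z ∩ L, ((nb B (Z \ L) u).card : ℝ) := by
      have h4 : ((cutE B Z Z).card : ℝ) ≤ 2 * (cutE B (Z ∩ L) (Z \ L)).card := by
        exact_mod_cast hL.trans (Nat.mul_le_mul_left 2 (Finset.card_le_card h2))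
      linarith [card_cutE_le B (Z ∩ L) (Z \ L)]
    refine le_trans ?_ (Finset.sum_le_sum fun u _ => hit (Z \ L) u)
    rw [← Finset.mul_sum, ← Finset.sum_div]
    calc β / 2 * ((cutE B Z Z).card / b)
        ≤ β / 2 * ((2 * ∑ u ∈ Z ∩ L, ((nb B (Z \ L) u).card : ℝ)) / b) := by gcongr
      _ = _ := by ring
  · have h1 := gain_augment hp0 hp1 hq0 hq2 hb hq (cov M)ᶜ M B hM hB disjoint_compl_right
    refine le_trans (add_le_add_right ?_ _) h1
    set x : V → ℝ := fun u => ((nb B (cov M)ᶜ u).card : ℝ) / b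
    have hx0 : ∀ u, 0 ≤ x u := fun u => by positivity
    have h2 : ((cutE B (cov M) (cov M)ᶜ).card : ℝ) / b ≤ ∑ e ∈ M, (x (fstE e) + x (sndE e)) := by
      rw [← sum_cov hM x, ← Finset.sum_div]
      have := card_cutE_le B (cov M) (cov M)ᶜ
      gcongr
    calc β ^ 2 * ((cutE B (cov M) (cov M)ᶜ).card / b - M.card) - M.card * (q ^ 2 * b)
        ≤ β ^ 2 * (∑ e ∈ M, (x (fstE e) + x (sndE e)) - M.card) - M.card * (q ^ 2 * b) := by
          gcongr
      _ = ∑ e ∈ M, (β ^ 2 * (x (fstE e) + x (sndE e) - 1) - q ^ 2 * b) := by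
          rw [Finset.sum_sub_distrib, ← Finset.mul_sum, Finset.sum_sub_distrib]
          simp
      _ ≤ _ := by
          refine Finset.sum_le_sum fun e _ => sub_le_sub_right ?_ _
          have h3 := mul_le_mul (hit (cov M)ᶜ (fstE e)) (hit (cov M)ᶜ (sndE e))
            (mul_nonneg hβ0 (hx0 _)) ((mul_nonneg hβ0 (hx0 _)).trans (hit _ _))
          refine le_trans ?_ h3
          -- `(1 - x) * (1 - y) ≥ 0` for the normalized degrees `x` and `y` of the endpoints.
          have h4 : 0 ≤ β ^ 2 * ((1 - x (fstE e)) * (1 - x (sndE e))) :=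
            mul_nonneg (sq_nonneg β)
              (mul_nonneg (sub_nonneg.2 (hle _ _)) (sub_nonneg.2 (hle _ _)))
          change _ ≤ β * x (fstE e) * (β * x (sndE e))
          linarith

/-- The numerical comparison: with `E₀ = e₀ / b` and `E₁ = e₁ / b`, counting edges gives
`E₁ ≥ 1.998 opt - 2 E₀ - 2 m`, and the bounds `m + 0.23 E₀` and
`m + 0.46 ^ 2 (E₁ - m) - 0.001 m` cannot both be below `0.52 opt` when `m ≥ 0.47999 opt`. -/
theorem EP_lower_bound {V : Type*} [Fintype V] {p : ℝ} (hp0 : 0 < p) (hp : p ≤ 1 / 1000)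
    {opt : ℝ} (hopt : 0 < opt) (M B : Finset (Sym2 V)) (hM : IsMatchingSet M)
    (hm : (1 / 2 - 0.02001) * opt ≤ (M.card : ℝ)) (hBs : EdgeSimple B)
    (hdeg : ∀ v : V, edeg B v ≤ ⌊1 / p⌋₊)
    (hcard : ((⌊1 / p⌋₊ : ℝ) - 1) * opt ≤ (B.card : ℝ)) :
    (1 / 2 + 0.02) * opt ≤ EP p B (fun S => (matchNum (M ∪ S) : ℝ)) := by
  obtain ⟨q, hb, hq0, hqp, hq, hβ⟩ := params hp0 hp
  set b := ⌊1 / p⌋₊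
  obtain ⟨h1, h2⟩ := two_bounds (β := 0.46) hp0.le (by linarith) hq0 (by linarith) (by omega) hq
    (by norm_num) hβ M B hM hBs hdeg
  have h3 := count_edges B hBs (cov M) hdeg
  rw [card_cov hM] at h3
  have h3' : 2 * (B.card : ℝ) ≤ 2 * (cutE B (cov M)ᶜ (cov M)ᶜ).card
      + (cutE B (cov M) (cov M)ᶜ).card + 2 * M.card * b := by exact_mod_cast h3
  have hbR : (1000 : ℝ) ≤ b := by exact_mod_cast hb
  have hb0 : (0 : ℝ) < b := by linarith
  set X := EP p B (fun S => (matchNum (M ∪ S) : ℝ))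
  set e0 := ((cutE B (cov M)ᶜ (cov M)ᶜ).card : ℝ)
  set e1 := ((cutE B (cov M) (cov M)ᶜ).card : ℝ)
  set m := (M.card : ℝ)
  have hE0 : 0 ≤ e0 / b := by positivity
  -- The counting bound divided by `b`.
  have h4 : 2 * (0.999 * opt) ≤ 2 * (e0 / b) + e1 / b + 2 * m := by
    have h5 : 2 * (0.999 * opt) * b ≤ 2 * e0 + e1 + 2 * m * b := by nlinarith
    have h6 : 2 * (e0 / b) + e1 / b + 2 * m = (2 * e0 + e1 + 2 * m * b) / b := by
      field_simp
    rw [h6, le_div_iff₀ hb0]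
    exact h5
  have h5 : q ^ 2 * b ≤ 0.001 := by
    have : (1 - p) ^ b ≥ 0 := pow_nonneg (by linarith) _
    nlinarith
  have hm0 : 0 ≤ m := Nat.cast_nonneg _
  have h6 : m * (q ^ 2 * b) ≤ m * 0.001 := mul_le_mul_of_nonneg_left h5 hm0
  by_contra! hlt
  linarith

theorem b_matching_augmentation :
    ∃ p0 : ℝ, 0 < p0 ∧ p0 < 1 ∧
      ∀ p : ℝ, 0 < p → p ≤ p0 →
      ∀ (V : Type) [Fintype V] [DecidableEq V] (opt : ℝ), 0 < opt →
      ∀ M B : Finset (Sym2 V),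
        IsMatchingSet M →
        (1 / 2 - 0.02001) * opt ≤ (M.card : ℝ) →
        EdgeSimple B →
        Disjoint M B →
        (∀ v : V, edeg B v ≤ ⌊1 / p⌋₊) →
        ((⌊1 / p⌋₊ : ℝ) - 1) * opt ≤ (B.card : ℝ) →
        (1 / 2 + 0.02) * opt ≤
          ∑ S ∈ B.powerset,
            p ^ S.card * (1 - p) ^ (B.card - S.card) * (matchNum (M ∪ S) : ℝ) := by
  refine ⟨1 / 1000, by norm_num, by norm_num, ?_⟩
  intro p hp0 hp V _ _ opt hopt M B hM hm hBs _ hdeg hcard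
  have h := EP_lower_bound hp0 hp hopt M B hM hm hBs hdeg hcard
  unfold EP at h
  dsimp only at h
  convert h
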